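/- arXiv:2406.04945 — 5 statements merged into one kernel-verified Lean document; each statement's English description precedes it below -/
import Mathlib

section
/- Let B be a ring, t an element of the center of B, X a projective left B-module, M a left B-module, and i a natural number. Then the additive map t^i·Hom_B(X, M) → Hom_B(X, t^i M ⧸ t^{i+1} M) sending a map of the form x ↦ t^i • f(x) to the composite of it with the quotient map t^i M → t^i M ⧸ t^{i+1} M is surjective, and its kernel is exactly t^{i+1}·Hom_B(X, M). Hence it induces an isomorphism of abelian groups t^i·Hom_B(X,M) ⧸ t^{i+1}·Hom_B(X,M) ≅ Hom_B(X, t^i M ⧸ t^{i+1} M). -/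
/-- Scalar multiplication by a central element `t` of a ring `B`, as a `B`-linear
endomorphism of a left `B`-module `M`. Its range is the submodule `t M`. -/
def centralSmul {B : Type*} [Ring B] (t : B) (ht : t ∈ Subring.center B)
    (M : Type*) [AddCommGroup M] [Module B M] : M →ₗ[B] M where
  toFun m := t • m
  map_add' x y := smul_add t x y
  map_smul' b m := by
    simp only [RingHom.id_apply, smul_smul]
    rw [Subring.mem_center_iff.mp ht b]

/-- The submodule `tⁱ M` of all elements of the form `tⁱ • m`. -/
def tPowSub {B : Type*} [Ring B] (t : B) (ht : t ∈ Subring.center B) (i : ℕ)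
    (M : Type*) [AddCommGroup M] [Module B M] : Submodule B M :=
  LinearMap.range (centralSmul (t ^ i) (pow_mem ht i) M)

/-- The additive subgroup `tⁱ·Hom_B(X, M)` of `Hom_B(X, M)` consisting of the `B`-linear
maps of the form `x ↦ tⁱ • f x` for some `B`-linear `f : X → M`. -/
def tPowHom {B : Type*} [Ring B] (t : B) (i : ℕ)
    (X M : Type*) [AddCommGroup X] [Module B X] [AddCommGroup M] [Module B M] :
    AddSubgroup (X →ₗ[B] M) where
  carrier := {h | ∃ f : X →ₗ[B] M, ∀ x : X, h x = t ^ i • f x}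
  zero_mem' := ⟨0, fun x => by simp⟩
  add_mem' := by
    rintro a b ⟨f, hf⟩ ⟨g, hg⟩
    exact ⟨f + g, fun x => by simp [hf x, hg x, smul_add]⟩
  neg_mem' := by
    rintro a ⟨f, hf⟩
    exact ⟨-f, fun x => by simp [hf x]⟩

/-- The map `tⁱ·Hom_B(X, M) → Hom_B(X, tⁱM ⧸ tⁱ⁺¹M)` sending a map of the form
`x ↦ tⁱ • f x` to its corestriction to `tⁱM` composed with the quotient map
`tⁱM → tⁱM ⧸ tⁱ⁺¹M`. -/
def tPowHomToGr {B : Type*} [Ring B] (t : B) (ht : t ∈ Subring.center B) (i : ℕ)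
    (X M : Type*) [AddCommGroup X] [Module B X] [AddCommGroup M] [Module B M]
    (h : ↥(tPowHom t i X M)) :
    X →ₗ[B] (↥(tPowSub t ht i M) ⧸
      ((tPowSub t ht (i + 1) M).comap (tPowSub t ht i M).subtype)) :=
  (((tPowSub t ht (i + 1) M).comap (tPowSub t ht i M).subtype).mkQ).comp
    (LinearMap.codRestrict (tPowSub t ht i M) h.1
      (fun x => LinearMap.mem_range.mpr ⟨h.2.choose x, (h.2.choose_spec x).symm⟩))

/-!
A map out of a projective module factors through `f` exactly when its range lies in the range
of `f`. Taking `f` to be multiplication by `tⁱ`, the subgroup `tⁱ·Hom_B(X, M)` consists of all maps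
with values in `tⁱ M`, that is, it is `Hom_B(X, tⁱ M)`. The claim is then the exactness of
`Hom_B(X, -)` on `0 → tⁱ⁺¹ M → tⁱ M → tⁱ M ⧸ tⁱ⁺¹ M → 0`.
-/

section Lifting

variable {R P M N : Type*} [Semiring R] [AddCommMonoid P] [Module R P] [Module.Projective R P]
  [AddCommMonoid M] [Module R M] [AddCommMonoid N] [Module R N]

theorem exists_comp_eq_iff_range_le_range_of_projective {f : M →ₗ[R] N} {h : P →ₗ[R] N} :
    (∃ g : P →ₗ[R] M, f ∘ₗ g = h) ↔ LinearMap.range h ≤ LinearMap.range f := by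
  constructor
  · rintro ⟨g, rfl⟩
    exact LinearMap.range_comp_le_range g f
  · intro hle
    obtain ⟨g, hg⟩ := Module.projective_lifting_property f.rangeRestrict
      (h.codRestrict (LinearMap.range f) fun x ↦ hle (LinearMap.mem_range_self h x))
      f.surjective_rangeRestrict
    exact ⟨g, LinearMap.ext fun x ↦ congrArg Subtype.val (LinearMap.congr_fun hg x)⟩

end Lifting

section CentralPowers

variable {B : Type*} [Ring B] {t : B} (ht : t ∈ Subring.center B) {i : ℕ}
  {X M : Type*} [AddCommGroup X] [Module B X] [AddCommGroup M] [Module B M]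

theorem mem_tPowHom_iff_exists_comp_eq {h : X →ₗ[B] M} :
    h ∈ tPowHom t i X M ↔
      ∃ f : X →ₗ[B] M, centralSmul (t ^ i) (pow_mem ht i) M ∘ₗ f = h :=
  exists_congr fun _ ↦ by rw [eq_comm, LinearMap.ext_iff]; rfl

theorem mem_tPowHom_iff_range_le_tPowSub [Module.Projective B X] {h : X →ₗ[B] M} :
    h ∈ tPowHom t i X M ↔ LinearMap.range h ≤ tPowSub t ht i M :=
  (mem_tPowHom_iff_exists_comp_eq ht).trans exists_comp_eq_iff_range_le_range_of_projective

theorem tPowHomToGr_eq_zero_iff_range_le_tPowSub (h : tPowHom t i X M) :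
    tPowHomToGr t ht i X M h = 0 ↔
      LinearMap.range (h : X →ₗ[B] M) ≤ tPowSub t ht (i + 1) M := by
  rw [LinearMap.ext_iff, LinearMap.range_le_iff_comap, Submodule.eq_top_iff']
  exact forall_congr' fun _ ↦ Submodule.Quotient.mk_eq_zero _

theorem tPowHomToGr_eq_zero_iff_mem_tPowHom [Module.Projective B X] (h : tPowHom t i X M) :
    tPowHomToGr t ht i X M h = 0 ↔ (h : X →ₗ[B] M) ∈ tPowHom t (i + 1) X M :=
  (tPowHomToGr_eq_zero_iff_range_le_tPowSub ht h).trans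
    (mem_tPowHom_iff_range_le_tPowSub ht).symm

theorem tPowHomToGr_add (a b : tPowHom t i X M) :
    tPowHomToGr t ht i X M (a + b) = tPowHomToGr t ht i X M a + tPowHomToGr t ht i X M b :=
  rfl

theorem tPowHomToGr_surjective [Module.Projective B X] :
    Function.Surjective (tPowHomToGr t ht i X M) := by
  intro g
  obtain ⟨g', rfl⟩ := Module.projective_lifting_property _ g (Submodule.mkQ_surjective _)
  have hmem : (tPowSub t ht i M).subtype ∘ₗ g' ∈ tPowHom t i X M := by
    rw [mem_tPowHom_iff_range_le_tPowSub ht]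
    exact (LinearMap.range_comp_le_range g' _).trans_eq (Submodule.range_subtype _)
  exact ⟨⟨_, hmem⟩, rfl⟩

variable (t i X M) in
/-- The map `tPowHomToGr` as a homomorphism of additive groups. -/
def tPowHomToGrAddHom : tPowHom t i X M →+ (X →ₗ[B] (tPowSub t ht i M ⧸
    (tPowSub t ht (i + 1) M).comap (tPowSub t ht i M).subtype)) :=
  AddMonoidHom.mk' (tPowHomToGr t ht i X M) (tPowHomToGr_add ht)

theorem ker_tPowHomToGrAddHom [Module.Projective B X] :
    (tPowHomToGrAddHom t ht i X M).ker =
      (tPowHom t (i + 1) X M).addSubgroupOf (tPowHom t i X M) :=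
  AddSubgroup.ext (tPowHomToGr_eq_zero_iff_mem_tPowHom ht)

variable (t i X M) in
/-- The isomorphism `Grⁱ_t(Hom_B(X, M)) ≃ Hom_B(X, Grⁱ_t(M))` for projective `X`, induced by
`tPowHomToGr`. -/
noncomputable def grTPowHomEquiv [Module.Projective B X] :
    (tPowHom t i X M ⧸ (tPowHom t (i + 1) X M).addSubgroupOf (tPowHom t i X M)) ≃+
      (X →ₗ[B] (tPowSub t ht i M ⧸
        (tPowSub t ht (i + 1) M).comap (tPowSub t ht i M).subtype)) :=
  (QuotientAddGroup.quotientAddEquivOfEq (ker_tPowHomToGrAddHom ht).symm).trans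
    (QuotientAddGroup.quotientKerEquivOfSurjective (tPowHomToGrAddHom t ht i X M)
      (tPowHomToGr_surjective ht))

end CentralPowers

/-- The additive map `tⁱ·Hom_B(X, M) → Hom_B(X, tⁱM ⧸ tⁱ⁺¹M)` given by
corestriction followed by the quotient map is surjective with kernel exactly
`tⁱ⁺¹·Hom_B(X, M)`; hence it induces an isomorphism of abelian groups
`tⁱ·Hom_B(X,M) ⧸ tⁱ⁺¹·Hom_B(X,M) ≅ Hom_B(X, tⁱM ⧸ tⁱ⁺¹M)`. -/
theorem tPowHomToGr_surjective_ker
    {B : Type*} [Ring B] (t : B) (ht : t ∈ Subring.center B)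
    (X M : Type*) [AddCommGroup X] [Module B X] [Module.Projective B X]
    [AddCommGroup M] [Module B M] (i : ℕ) :
    (∀ a b : ↥(tPowHom t i X M),
        tPowHomToGr t ht i X M (a + b) = tPowHomToGr t ht i X M a + tPowHomToGr t ht i X M b) ∧
    Function.Surjective (tPowHomToGr t ht i X M) ∧
    (∀ h : ↥(tPowHom t i X M),
        tPowHomToGr t ht i X M h = 0 ↔ (h : X →ₗ[B] M) ∈ tPowHom t (i + 1) X M) ∧
    Nonempty ((↥(tPowHom t i X M) ⧸ ((tPowHom t (i + 1) X M).addSubgroupOf (tPowHom t i X M)))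
      ≃+ (X →ₗ[B] (↥(tPowSub t ht i M) ⧸
          ((tPowSub t ht (i + 1) M).comap (tPowSub t ht i M).subtype)))) :=
  ⟨tPowHomToGr_add ht, tPowHomToGr_surjective ht, tPowHomToGr_eq_zero_iff_mem_tPowHom ht,
    ⟨grTPowHomEquiv t ht i X M⟩⟩
end

section
/- Let B be a ring, t an element of the center of B, and n a natural number with t^{n+1} = 0 in B. Let X be a projective left B-module and let M be a cochain complex of left B-modules (indexed by ℤ). For each i, let t^i M denote the subcomplex whose degree-j term is t^i M^j, and let Gr^i_t(M) = t^i M ⧸ t^{i+1} M. Let Hom_B(X, M) denote the cochain complex whose degree-j term is Hom_B(X, M^j), with differentials given by postcomposition with those of M, filtered by the subcomplexes t^i·Hom_B(X,M) whose degree-j terms consist of the maps of the form x ↦ t^i • f(x) for f ∈ Hom_B(X, M^j). If the complex Gr^i_t(M) is acyclic for every i = 0, …, n, then the complex t^i·Hom_B(X,M) ⧸ t^{i+1}·Hom_B(X,M) is acyclic for every i = 0, …, n. -/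
/-!
If `g : X → M` has values in `aM` and `d' ∘ g` has values in `bN`, then acyclicity puts the values
of `g` in `d(aL) + bM`. This is the image of `(y, m) ↦ d (a • y) + b • m`, which is linear because
`a` and `b` are central, so `g` lifts along that map when `X` is projective. The graded pieces are
the case `a = tⁱ`, `b = tⁱ⁺¹`.
-/

section Projective

variable {R X P Q N : Type*} [Semiring R] [AddCommMonoid X] [Module R X] [Module.Projective R X]
  [AddCommMonoid P] [Module R P] [AddCommMonoid Q] [Module R Q] [AddCommMonoid N] [Module R N]

theorem exists_comp_eq_of_range_le {φ : P →ₗ[R] N} {g : X →ₗ[R] N}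
    (hg : LinearMap.range g ≤ LinearMap.range φ) : ∃ l : X →ₗ[R] P, φ ∘ₗ l = g := by
  obtain ⟨l, hl⟩ := Module.projective_lifting_property φ.rangeRestrict
    (g.codRestrict _ fun x => hg (g.mem_range_self x)) φ.surjective_rangeRestrict
  exact ⟨l, LinearMap.ext fun x => congrArg Subtype.val (LinearMap.congr_fun hl x)⟩

theorem exists_comp_add_comp_eq_of_range_le_sup {φ : P →ₗ[R] N} {ψ : Q →ₗ[R] N} {g : X →ₗ[R] N}
    (hg : LinearMap.range g ≤ LinearMap.range φ ⊔ LinearMap.range ψ) :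
    ∃ (l : X →ₗ[R] P) (l' : X →ₗ[R] Q), φ ∘ₗ l + ψ ∘ₗ l' = g := by
  rw [← LinearMap.range_coprod] at hg
  obtain ⟨l, hl⟩ := exists_comp_eq_of_range_le hg
  exact ⟨LinearMap.fst R P Q ∘ₗ l, LinearMap.snd R P Q ∘ₗ l, hl⟩

end Projective

theorem hom_gr_acyclic_of_gr_acyclic_general {B X L M N : Type*} [Ring B]
    [AddCommGroup X] [Module B X] [Module.Projective B X] [AddCommGroup L] [Module B L]
    [AddCommGroup M] [Module B M] [AddCommGroup N] [Module B N]
    {a b : B} (ha : a ∈ Subring.center B) (hb : b ∈ Subring.center B)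
    (d : L →ₗ[B] M) (d' : M →ₗ[B] N)
    (hGr : ∀ x : M, (∃ m : M, x = a • m) → (∃ m : N, d' x = b • m) →
      ∃ y : L, (∃ m : L, y = a • m) ∧ ∃ m : M, d y - x = b • m)
    (g : X →ₗ[B] M) (hg : ∃ f : X →ₗ[B] M, ∀ x, g x = a • f x)
    (hdg : ∃ f : X →ₗ[B] N, ∀ x, d' (g x) = b • f x) :
    ∃ h : X →ₗ[B] L, (∃ f : X →ₗ[B] L, ∀ x, h x = a • f x) ∧
      ∃ f : X →ₗ[B] M, ∀ x, d (h x) - g x = b • f x := by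
  obtain ⟨f, hf⟩ := hg
  obtain ⟨f', hf'⟩ := hdg
  let aL : Module.End B L := .smulLeft a ha
  let bM : Module.End B M := .smulLeft b hb
  have range_le : LinearMap.range g ≤ LinearMap.range (d ∘ₗ aL) ⊔ LinearMap.range bM := by
    rintro _ ⟨x, rfl⟩
    obtain ⟨_, ⟨y, rfl⟩, m, hm⟩ := hGr (g x) ⟨f x, hf x⟩ ⟨f' x, hf' x⟩
    have hgx : g x = d (a • y) - b • m := by rw [← hm, sub_sub_cancel]
    rw [hgx]
    exact Submodule.sub_mem_sup ⟨y, rfl⟩ ⟨m, rfl⟩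
  obtain ⟨l, l', hl⟩ := exists_comp_add_comp_eq_of_range_le_sup range_le
  refine ⟨aL ∘ₗ l, ⟨l, fun _ => rfl⟩, -l', fun x => ?_⟩
  have hgx : d (a • l x) + b • l' x = g x := LinearMap.congr_fun hl x
  calc d (a • l x) - g x = -(b • l' x) := by rw [← hgx, sub_add_cancel_left]
    _ = b • (-l') x := (smul_neg b (l' x)).symm

/-- Let `B` be a ring, `t` a central element with `t^(n+1) = 0`, `X` a
projective left `B`-module and `M` a cochain complex of left `B`-modules (given by modules
`M j` and differentials `d j : M j → M (j+1)` squaring to zero).  If the associated graded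
complex `Grⁱ_t(M) = tⁱM ⧸ tⁱ⁺¹M` is acyclic for every `i = 0, …, n` (elementwise: every
`x ∈ tⁱ M^(j+1)` with `d x ∈ tⁱ⁺¹ M^(j+2)` is, modulo `tⁱ⁺¹`, the differential of an element
of `tⁱ M^j`), then for the Hom-complex `Hom_B(X, M)` — with degree-`j` term `Hom_B(X, M^j)`,
differential given by postcomposition, and filtration by the subcomplexes `tⁱ·Hom_B(X,M)`
of maps of the form `x ↦ tⁱ • f x` — the complex `tⁱ·Hom_B(X,M) ⧸ tⁱ⁺¹·Hom_B(X,M)` is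
acyclic for every `i = 0, …, n`. -/
theorem hom_gr_acyclic_of_gr_acyclic
    {B : Type*} [Ring B] (t : B) (ht : t ∈ Subring.center B) (n : ℕ)
    (htn : t ^ (n + 1) = 0)
    (X : Type*) [AddCommGroup X] [Module B X] [Module.Projective B X]
    (M : ℤ → Type*) [∀ j, AddCommGroup (M j)] [∀ j, Module B (M j)]
    (d : ∀ j : ℤ, M j →ₗ[B] M (j + 1))
    (hdd : ∀ (j : ℤ) (x : M j), d (j + 1) (d j x) = 0)
    (hGr : ∀ i ≤ n, ∀ (j : ℤ) (x : M (j + 1)),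
      (∃ m : M (j + 1), x = t ^ i • m) →
      (∃ m : M (j + 1 + 1), d (j + 1) x = t ^ (i + 1) • m) →
      ∃ y : M j, (∃ m : M j, y = t ^ i • m) ∧
        (∃ m : M (j + 1), d j y - x = t ^ (i + 1) • m)) :
    ∀ i ≤ n, ∀ (j : ℤ) (g : X →ₗ[B] M (j + 1)),
      (∃ f : X →ₗ[B] M (j + 1), ∀ x : X, g x = t ^ i • f x) →
      (∃ f : X →ₗ[B] M (j + 1 + 1), ∀ x : X, d (j + 1) (g x) = t ^ (i + 1) • f x) →
      ∃ h : X →ₗ[B] M j, (∃ f : X →ₗ[B] M j, ∀ x : X, h x = t ^ i • f x) ∧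
        (∃ f : X →ₗ[B] M (j + 1), ∀ x : X, d j (h x) - g x = t ^ (i + 1) • f x) :=
  fun i hi j => hom_gr_acyclic_of_gr_acyclic_general (pow_mem ht i) (pow_mem ht (i + 1))
    (d j) (d (j + 1)) (hGr i hi j)
end

section
/- Let R be a commutative ring, t ∈ R, X a flat R-module, M an R-module, and i a natural number. Then there is an isomorphism of R-modules t^i(M ⊗_R X) ⧸ t^{i+1}(M ⊗_R X) ≅ (t^i M ⧸ t^{i+1} M) ⊗_R X, natural in M and X, sending the class of t^i • (m ⊗ x) to [t^i • m] ⊗ x. -/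
open TensorProduct

universe u

/-- The submodule `cN` of an `R`-module `N`, i.e. the range of scalar multiplication
by `c : R`. -/
def smulSub (R : Type u) [CommRing R] (c : R)
    (N : Type u) [AddCommGroup N] [Module R N] : Submodule R N :=
  LinearMap.range (LinearMap.lsmul R N c)

/-- The `i`-th associated graded piece `Grⁱ_t(N) = tⁱN ⧸ tⁱ⁺¹N` of the `t`-adic
filtration of an `R`-module `N`. -/
def grPiece (R : Type u) [CommRing R] (t : R) (i : ℕ)
    (N : Type u) [AddCommGroup N] [Module R N] :=
  ↥(smulSub R (t ^ i) N) ⧸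
    ((smulSub R (t ^ (i + 1)) N).comap (smulSub R (t ^ i) N).subtype)

noncomputable instance (R : Type u) [CommRing R] (t : R) (i : ℕ)
    (N : Type u) [AddCommGroup N] [Module R N] : AddCommGroup (grPiece R t i N) :=
  inferInstanceAs (AddCommGroup (↥(smulSub R (t ^ i) N) ⧸
    ((smulSub R (t ^ (i + 1)) N).comap (smulSub R (t ^ i) N).subtype)))

noncomputable instance (R : Type u) [CommRing R] (t : R) (i : ℕ)
    (N : Type u) [AddCommGroup N] [Module R N] : Module R (grPiece R t i N) :=
  inferInstanceAs (Module R (↥(smulSub R (t ^ i) N) ⧸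
    ((smulSub R (t ^ (i + 1)) N).comap (smulSub R (t ^ i) N).subtype)))

/-!
For every module `N`, the surjection `N → Grⁱ_t(N)`, `n ↦ [tⁱ n]`, has the same kernel as the
composite `N → N → N ⧸ tⁱ⁺¹N` of multiplication by `tⁱ` and the projection. Flatness of `X` makes
the kernel of `f ⊗ X` depend only on that of `f`, and right exactness identifies
`(M ⧸ tⁱ⁺¹M) ⊗ X` with `(M ⊗ X) ⧸ tⁱ⁺¹(M ⊗ X)`. So the surjections from `M ⊗ X` onto
`Grⁱ_t(M ⊗ X)` and `Grⁱ_t(M) ⊗ X` have the same kernel.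
-/

section EquivOfKerEq

variable {R M N P : Type*} [Ring R] [AddCommGroup M] [Module R M] [AddCommGroup N] [Module R N]
  [AddCommGroup P] [Module R P] {f : M →ₗ[R] N} {g : M →ₗ[R] P}

/-- The canonical isomorphism between the targets of two surjective linear maps on the same
module that have the same kernel, sending `f m` to `g m`. -/
noncomputable def equivOfKerEq (hf : Function.Surjective f) (hg : Function.Surjective g)
    (h : LinearMap.ker f = LinearMap.ker g) : N ≃ₗ[R] P :=
  (f.quotKerEquivOfSurjective hf).symm ≪≫ₗ Submodule.quotEquivOfEq _ _ h ≪≫ₗ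
    g.quotKerEquivOfSurjective hg

theorem equivOfKerEq_apply (hf : Function.Surjective f) (hg : Function.Surjective g)
    (h : LinearMap.ker f = LinearMap.ker g) (m : M) : equivOfKerEq hf hg h (f m) = g m := by
  have symm_apply : (f.quotKerEquivOfSurjective hf).symm (f m) = Submodule.Quotient.mk m :=
    (LinearEquiv.symm_apply_eq _).mpr rfl
  simp only [equivOfKerEq, LinearEquiv.trans_apply, symm_apply]
  rfl

end EquivOfKerEq

theorem rTensor_lsmul {R M X : Type*} [CommSemiring R] [AddCommMonoid M] [Module R M]
    [AddCommMonoid X] [Module R X] (c : R) :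
    (LinearMap.lsmul R M c).rTensor X = LinearMap.lsmul R (M ⊗[R] X) c :=
  LinearMap.rTensor_smul_action X M c

section Flat

variable {R M N P : Type*} (X : Type*) [CommRing R] [AddCommGroup M] [Module R M]
  [AddCommGroup N] [Module R N] [AddCommGroup P] [Module R P] [AddCommGroup X] [Module R X]
  [Module.Flat R X]

theorem ker_rTensor_eq_range (f : M →ₗ[R] N) :
    LinearMap.ker (f.rTensor X) = LinearMap.range ((LinearMap.ker f).subtype.rTensor X) :=
  (Module.Flat.rTensor_exact X f.exact_subtype_ker_map).linearMap_ker_eq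

theorem ker_rTensor_congr {f : M →ₗ[R] N} {g : M →ₗ[R] P}
    (h : LinearMap.ker f = LinearMap.ker g) :
    LinearMap.ker (f.rTensor X) = LinearMap.ker (g.rTensor X) := by
  rw [ker_rTensor_eq_range, ker_rTensor_eq_range, h]

end Flat

section GrPiece

variable (R : Type u) [CommRing R] (t : R) (i : ℕ) (M : Type u) [AddCommGroup M] [Module R M]
  (X : Type u) [AddCommGroup X] [Module R X]

theorem ker_rTensor_mkQ_smulSub (c : R) :
    LinearMap.ker ((smulSub R c M).mkQ.rTensor X) = smulSub R c (M ⊗[R] X) := by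
  have exact_rTensor := rTensor_exact X (LinearMap.lsmul R M c).exact_map_mkQ_range
    (Submodule.mkQ_surjective _)
  rw [rTensor_lsmul] at exact_rTensor
  exact exact_rTensor.linearMap_ker_eq

/-- The surjection `M → Grⁱ_t(M)`, `m ↦ [tⁱ m]`, presenting the graded piece as a quotient of
`M` itself. -/
noncomputable def grProj : M →ₗ[R] grPiece R t i M :=
  Submodule.mkQ _ ∘ₗ (LinearMap.lsmul R M (t ^ i)).rangeRestrict

theorem grProj_surjective : Function.Surjective (grProj R t i M) :=
  (Submodule.mkQ_surjective _).comp (LinearMap.surjective_rangeRestrict _)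

theorem ker_grProj :
    LinearMap.ker (grProj R t i M) =
      LinearMap.ker ((smulSub R (t ^ (i + 1)) M).mkQ ∘ₗ LinearMap.lsmul R M (t ^ i)) := by
  rw [LinearMap.ker_comp, Submodule.ker_mkQ]
  exact Submodule.ext fun _ => Submodule.Quotient.mk_eq_zero _

theorem ker_grProj_tensor [Module.Flat R X] :
    LinearMap.ker (grProj R t i (M ⊗[R] X)) = LinearMap.ker ((grProj R t i M).rTensor X) := by
  let q := (smulSub R (t ^ (i + 1)) M).mkQ
  let q' := (smulSub R (t ^ (i + 1)) (M ⊗[R] X)).mkQ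
  calc LinearMap.ker (grProj R t i (M ⊗[R] X))
      = LinearMap.ker (q' ∘ₗ LinearMap.lsmul R (M ⊗[R] X) (t ^ i)) := ker_grProj R t i (M ⊗[R] X)
    _ = (LinearMap.ker (q.rTensor X)).comap (LinearMap.lsmul R (M ⊗[R] X) (t ^ i)) := by
        rw [ker_rTensor_mkQ_smulSub, LinearMap.ker_comp, Submodule.ker_mkQ]
    _ = LinearMap.ker ((q ∘ₗ LinearMap.lsmul R M (t ^ i)).rTensor X) := by
        rw [LinearMap.rTensor_comp, LinearMap.ker_comp, rTensor_lsmul]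
    _ = LinearMap.ker ((grProj R t i M).rTensor X) :=
        (ker_rTensor_congr X (ker_grProj R t i M)).symm

end GrPiece

/-- For a commutative ring `R`, `t ∈ R`, a flat `R`-module `X`, an `R`-module
`M` and `i : ℕ`, there is an isomorphism of `R`-modules
`tⁱ(M ⊗_R X) ⧸ tⁱ⁺¹(M ⊗_R X) ≅ (tⁱM ⧸ tⁱ⁺¹M) ⊗_R X`, natural in `M` and `X`, sending the
class of `tⁱ • (m ⊗ x)` to `[tⁱ • m] ⊗ x` (naturality is encoded by giving the isomorphism
simultaneously for all `M` and `X`, determined by the stated formula). -/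
theorem gr_tensor_equiv
    (R : Type u) [CommRing R] (t : R) (i : ℕ) :
    ∃ e : ∀ (M : Type u) [AddCommGroup M] [Module R M]
        (X : Type u) [AddCommGroup X] [Module R X] [Module.Flat R X],
        grPiece R t i (M ⊗[R] X) ≃ₗ[R] ((grPiece R t i M) ⊗[R] X),
      ∀ (M : Type u) [AddCommGroup M] [Module R M]
        (X : Type u) [AddCommGroup X] [Module R X] [Module.Flat R X]
        (m : M) (x : X),
        e M X (Submodule.Quotient.mk
            ⟨t ^ i • (m ⊗ₜ[R] x), LinearMap.mem_range.mpr ⟨m ⊗ₜ[R] x, rfl⟩⟩) =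
          (Submodule.Quotient.mk
            ⟨t ^ i • m, LinearMap.mem_range.mpr ⟨m, rfl⟩⟩ : grPiece R t i M) ⊗ₜ[R] x := by
  refine ⟨fun M _ _ X _ _ _ => equivOfKerEq (grProj_surjective R t i (M ⊗[R] X))
    (LinearMap.rTensor_surjective X (grProj_surjective R t i M)) (ker_grProj_tensor R t i M X), ?_⟩
  intro M _ _ X _ _ _ m x
  exact equivOfKerEq_apply _ _ _ (m ⊗ₜ[R] x)
end

section
/- Let R be a ring, t an element of the center of R, and n a natural number with t^{n+1} = 0 in R. Let f : M → N be a morphism of cochain complexes of left R-modules. For each i, f restricts to a morphism t^i M → t^i N and hence induces morphisms of complexes Gr^i_t(f) : t^i M ⧸ t^{i+1} M → t^i N ⧸ t^{i+1} N. If Gr^i_t(f) is a quasi-isomorphism for every i = 0, …, n, then f is a quasi-isomorphism. -/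
/-!
A morphism of complexes is a quasi-isomorphism iff its mapping cone is acyclic, and the filtrations
of the source and the target induce a finite filtration of the cone whose graded pieces are the
cones of the morphisms `Grⁱ(f)`. So it suffices that a complex with a finite filtration and acyclic
graded pieces is acyclic: modulo boundaries, a cocycle can be pushed one filtration step deeper at
a time, until it vanishes.
-/

theorem exact_of_gr_exact {A B C : Type*} [AddCommGroup A] [AddCommGroup B] [AddCommGroup C]
    {g : A →+ B} {h : B →+ C} (hgh : ∀ a, h (g a) = 0) {F : ℕ → AddSubgroup B} {n : ℕ}
    (hF_zero : F 0 = ⊤) (hF_last : F (n + 1) = ⊥)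
    (hgr : ∀ i ≤ n, ∀ b ∈ F i, h b = 0 → ∃ a, b - g a ∈ F (i + 1)) :
    Function.Exact g h := by
  intro b
  refine ⟨fun hb => ?_, ?_⟩
  · have approx : ∀ i ≤ n + 1, ∃ a, b - g a ∈ F i := by
      intro i
      induction i with
      | zero => exact fun _ => ⟨0, by simp [hF_zero]⟩
      | succ i ih =>
        intro hi
        obtain ⟨a, ha⟩ := ih (by omega)
        obtain ⟨a', ha'⟩ := hgr i (by omega) _ ha (by rw [map_sub, hb, hgh, sub_zero])
        exact ⟨a + a', by rwa [map_add, ← sub_sub]⟩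
    obtain ⟨a, ha⟩ := approx (n + 1) le_rfl
    rw [hF_last, AddSubgroup.mem_bot, sub_eq_zero] at ha
    exact ⟨a, ha.symm⟩
  · rintro ⟨a, rfl⟩
    exact hgh a

section Cone

variable {M₁ M₂ M₃ N₀ N₁ N₂ : Type*} [AddCommGroup M₁] [AddCommGroup M₂] [AddCommGroup M₃]
  [AddCommGroup N₀] [AddCommGroup N₁] [AddCommGroup N₂]

/-- The differential `(z, y) ↦ (d z, f z - d y)` of the mapping cone of `f`, with the signs chosen
so that `(z, y)` is a cocycle iff `d z = 0` and `f z = d y`. -/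
def coneDifferential (dM : M₁ →+ M₂) (dN : N₀ →+ N₁) (f : M₁ →+ N₁) : M₁ × N₀ →+ M₂ × N₁ :=
  (dM.comp (.fst M₁ N₀)).prod (f.comp (.fst M₁ N₀) - dN.comp (.snd M₁ N₀))

theorem coneDifferential_apply (dM : M₁ →+ M₂) (dN : N₀ →+ N₁) (f : M₁ →+ N₁) (p : M₁ × N₀) :
    coneDifferential dM dN f p = (dM p.1, f p.1 - dN p.2) :=
  rfl

theorem coneDifferential_eq_zero_iff {dM : M₁ →+ M₂} {dN : N₀ →+ N₁} {f : M₁ →+ N₁}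
    {p : M₁ × N₀} : coneDifferential dM dN f p = 0 ↔ dM p.1 = 0 ∧ f p.1 = dN p.2 := by
  rw [coneDifferential_apply, Prod.mk_eq_zero, sub_eq_zero]

variable {dM₁ : M₁ →+ M₂} {dM₂ : M₂ →+ M₃} {dN₀ : N₀ →+ N₁} {dN₁ : N₁ →+ N₂}
  {f₁ : M₁ →+ N₁} {f₂ : M₂ →+ N₂}

theorem coneDifferential_coneDifferential (hdM : ∀ z, dM₂ (dM₁ z) = 0)
    (hdN : ∀ y, dN₁ (dN₀ y) = 0) (hf : ∀ z, f₂ (dM₁ z) = dN₁ (f₁ z)) (p : M₁ × N₀) :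
    coneDifferential dM₂ dN₁ f₂ (coneDifferential dM₁ dN₀ f₁ p) = 0 := by
  simp only [coneDifferential_apply, map_sub, hdM, hdN, hf, sub_zero, sub_self, Prod.mk_zero_zero]

theorem exists_cocycle_of_cone_exact
    (hcone : Function.Exact (coneDifferential dM₁ dN₀ f₁) (coneDifferential dM₂ dN₁ f₂))
    {x : N₁} (hx : dN₁ x = 0) : ∃ z y, dM₁ z = 0 ∧ f₁ z = x + dN₀ y := by
  have hcocycle : coneDifferential dM₂ dN₁ f₂ (0, x) = 0 :=
    coneDifferential_eq_zero_iff.mpr ⟨map_zero dM₂, by rw [map_zero, hx]⟩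
  obtain ⟨⟨z, y⟩, hzy⟩ := (hcone _).mp hcocycle
  obtain ⟨hz, hy⟩ := Prod.mk.inj hzy
  exact ⟨z, y, hz, eq_add_of_sub_eq hy⟩

theorem exists_eq_differential_of_cone_exact
    (hcone : Function.Exact (coneDifferential dM₁ dN₀ f₁) (coneDifferential dM₂ dN₁ f₂))
    {z : M₂} (hz : dM₂ z = 0) {y : N₁} (hy : f₂ z = dN₁ y) : ∃ w, z = dM₁ w := by
  obtain ⟨⟨w, v⟩, hwv⟩ := (hcone (z, y)).mp (coneDifferential_eq_zero_iff.mpr ⟨hz, hy⟩)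
  exact ⟨w, (congrArg Prod.fst hwv).symm⟩

end Cone

section Filtration

variable {M N : ℤ → Type*} [∀ j, AddCommGroup (M j)] [∀ j, AddCommGroup (N j)]

/-- Surjectivity of the map induced by `f` on the cohomology of the graded pieces
`Fⁱ ⧸ Fⁱ⁺¹` of filtered complexes, elementwise. The degree is `j + 1`, so that the incoming
differential starts in degree `j`. -/
def GrCohomologySurjective (dM : ∀ j, M j →+ M (j + 1)) (dN : ∀ j, N j →+ N (j + 1))
    (f : ∀ j, M j →+ N j) (FM : ℕ → ∀ j, AddSubgroup (M j)) (FN : ℕ → ∀ j, AddSubgroup (N j))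
    (i : ℕ) (j : ℤ) : Prop :=
  ∀ x : N (j + 1), x ∈ FN i (j + 1) → dN (j + 1) x ∈ FN (i + 1) (j + 1 + 1) →
    ∃ (z : M (j + 1)) (y : N j),
      z ∈ FM i (j + 1) ∧ dM (j + 1) z ∈ FM (i + 1) (j + 1 + 1) ∧
      y ∈ FN i j ∧ f (j + 1) z - x - dN j y ∈ FN (i + 1) (j + 1)

/-- Injectivity of the map induced by `f` on the cohomology of the graded pieces
`Fⁱ ⧸ Fⁱ⁺¹` of filtered complexes in degree `j + 1`, elementwise. -/
def GrCohomologyInjective (dM : ∀ j, M j →+ M (j + 1)) (dN : ∀ j, N j →+ N (j + 1))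
    (f : ∀ j, M j →+ N j) (FM : ℕ → ∀ j, AddSubgroup (M j)) (FN : ℕ → ∀ j, AddSubgroup (N j))
    (i : ℕ) (j : ℤ) : Prop :=
  ∀ z : M (j + 1), z ∈ FM i (j + 1) → dM (j + 1) z ∈ FM (i + 1) (j + 1 + 1) →
    (∃ y : N j, y ∈ FN i j ∧ f (j + 1) z - dN j y ∈ FN (i + 1) (j + 1)) →
    ∃ w : M j, w ∈ FM i j ∧ z - dM j w ∈ FM (i + 1) (j + 1)

variable {dM : ∀ j, M j →+ M (j + 1)} {dN : ∀ j, N j →+ N (j + 1)} {f : ∀ j, M j →+ N j}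
  {FM : ℕ → ∀ j, AddSubgroup (M j)} {FN : ℕ → ∀ j, AddSubgroup (N j)}

-- Injectivity makes the component in `M` a boundary `d w` modulo `Fⁱ⁺¹`; surjectivity, applied to
-- the remaining `y - f w`, then corrects `w` by a cocycle `z'` of the graded piece.
theorem exists_sub_coneDifferential_mem (hf : ∀ j x, f (j + 1) (dM j x) = dN j (f j x))
    (hfF : ∀ i j, FM i j ≤ (FN i j).comap (f j)) {i : ℕ} {j : ℤ}
    (hsurj : GrCohomologySurjective dM dN f FM FN i j)
    (hinj : GrCohomologyInjective dM dN f FM FN i (j + 1))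
    {p : M (j + 1 + 1) × N (j + 1)} (hp : p ∈ (FM i (j + 1 + 1)).prod (FN i (j + 1)))
    (hcocycle : coneDifferential (dM (j + 1 + 1)) (dN (j + 1)) (f (j + 1 + 1)) p = 0) :
    ∃ q, p - coneDifferential (dM (j + 1)) (dN j) (f (j + 1)) q ∈
      (FM (i + 1) (j + 1 + 1)).prod (FN (i + 1) (j + 1)) := by
  obtain ⟨z, y⟩ := p
  obtain ⟨hz, hy⟩ := AddSubgroup.mem_prod.mp hp
  obtain ⟨hdz, hfz⟩ := coneDifferential_eq_zero_iff.mp hcocycle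
  obtain ⟨w, hw, hzw⟩ := hinj z hz (hdz ▸ zero_mem _) ⟨y, hy, sub_eq_zero.mpr hfz ▸ zero_mem _⟩
  have hd_sub : dN (j + 1) (y - f (j + 1) w) = f (j + 1 + 1) (z - dM (j + 1) w) := by
    rw [map_sub, map_sub, hf, hfz]
  obtain ⟨z', v, -, hdz', -, hv⟩ := hsurj (y - f (j + 1) w) (sub_mem hy (hfF _ _ hw))
    (hd_sub ▸ hfF _ _ hzw)
  refine ⟨(w + z', v), AddSubgroup.mem_prod.mpr ⟨?_, ?_⟩⟩
  · change z - dM (j + 1) (w + z') ∈ _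
    rw [map_add, ← sub_sub]
    exact sub_mem hzw hdz'
  · have hy_sub : y - (f (j + 1) (w + z') - dN j v) =
        -(f (j + 1) z' - (y - f (j + 1) w) - dN j v) := by
      rw [map_add]
      abel
    change y - (f (j + 1) (w + z') - dN j v) ∈ _
    rw [hy_sub]
    exact neg_mem hv

theorem cone_exact_of_gr (hdM : ∀ j x, dM (j + 1) (dM j x) = 0)
    (hdN : ∀ j x, dN (j + 1) (dN j x) = 0) (hf : ∀ j x, f (j + 1) (dM j x) = dN j (f j x))
    (hfF : ∀ i j, FM i j ≤ (FN i j).comap (f j)) {n : ℕ}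
    (hFM_zero : ∀ j, FM 0 j = ⊤) (hFM_last : ∀ j, FM (n + 1) j = ⊥)
    (hFN_zero : ∀ j, FN 0 j = ⊤) (hFN_last : ∀ j, FN (n + 1) j = ⊥) {j : ℤ}
    (hsurj : ∀ i ≤ n, GrCohomologySurjective dM dN f FM FN i j)
    (hinj : ∀ i ≤ n, GrCohomologyInjective dM dN f FM FN i (j + 1)) :
    Function.Exact (coneDifferential (dM (j + 1)) (dN j) (f (j + 1)))
      (coneDifferential (dM (j + 1 + 1)) (dN (j + 1)) (f (j + 1 + 1))) :=
  exact_of_gr_exact (coneDifferential_coneDifferential (hdM _) (hdN _) (hf _))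
    (F := fun i => (FM i (j + 1 + 1)).prod (FN i (j + 1)))
    (by simp only [hFM_zero, hFN_zero, AddSubgroup.top_prod_top])
    (by simp only [hFM_last, hFN_last, AddSubgroup.bot_prod_bot])
    fun i hi _ => exists_sub_coneDifferential_mem hf hfF (hsurj i hi) (hinj i hi)

theorem quasiIso_of_gr_quasiIso_general (hdM : ∀ j x, dM (j + 1) (dM j x) = 0)
    (hdN : ∀ j x, dN (j + 1) (dN j x) = 0) (hf : ∀ j x, f (j + 1) (dM j x) = dN j (f j x))
    (hfF : ∀ i j, FM i j ≤ (FN i j).comap (f j)) {n : ℕ}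
    (hFM_zero : ∀ j, FM 0 j = ⊤) (hFM_last : ∀ j, FM (n + 1) j = ⊥)
    (hFN_zero : ∀ j, FN 0 j = ⊤) (hFN_last : ∀ j, FN (n + 1) j = ⊥)
    (hGrSurj : ∀ i ≤ n, ∀ j, GrCohomologySurjective dM dN f FM FN i j)
    (hGrInj : ∀ i ≤ n, ∀ j, GrCohomologyInjective dM dN f FM FN i j) :
    (∀ (j : ℤ) (x : N (j + 1)), dN (j + 1) x = 0 →
      ∃ (z : M (j + 1)) (y : N j), dM (j + 1) z = 0 ∧ f (j + 1) z = x + dN j y) ∧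
    (∀ (j : ℤ) (z : M (j + 1)), dM (j + 1) z = 0 →
      (∃ y : N j, f (j + 1) z = dN j y) → ∃ w : M j, z = dM j w) := by
  have hcone (j : ℤ) := cone_exact_of_gr hdM hdN hf hfF hFM_zero hFM_last hFN_zero hFN_last
    (fun i hi => hGrSurj i hi j) (fun i hi => hGrInj i hi (j + 1))
  refine ⟨fun j x hx => exists_cocycle_of_cone_exact (hcone j) hx, fun j => ?_⟩
  obtain ⟨k, rfl⟩ : ∃ k : ℤ, j = k + 1 := ⟨j - 1, by omega⟩
  rintro z hz ⟨y, hy⟩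
  exact exists_eq_differential_of_cone_exact (hcone k) hz hy

end Filtration

section PowSMul

/-- The `i`-th step `tⁱA` of the `t`-adic filtration of `A`: the additive subgroup of all `tⁱ • a`
with `a ∈ A`. -/
def powSMulSubgroup {R : Type*} [Semiring R] (t : R) (A : Type*) [AddCommGroup A] [Module R A]
    (i : ℕ) : AddSubgroup A where
  carrier := {x | ∃ a, x = t ^ i • a}
  zero_mem' := ⟨0, (smul_zero _).symm⟩
  add_mem' := by
    rintro _ _ ⟨a, rfl⟩ ⟨b, rfl⟩
    exact ⟨a + b, (smul_add _ a b).symm⟩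
  neg_mem' := by
    rintro _ ⟨a, rfl⟩
    exact ⟨-a, (smul_neg _ a).symm⟩

variable {R A B : Type*} [Semiring R] [AddCommGroup A] [Module R A] [AddCommGroup B] [Module R B]

theorem powSMulSubgroup_zero (t : R) : powSMulSubgroup t A 0 = ⊤ :=
  eq_top_iff.mpr fun a _ => ⟨a, by rw [pow_zero, one_smul]⟩

theorem powSMulSubgroup_eq_bot {t : R} {i : ℕ} (ht : t ^ i = 0) : powSMulSubgroup t A i = ⊥ := by
  rw [eq_bot_iff]
  rintro _ ⟨a, rfl⟩
  rw [ht, zero_smul]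
  exact zero_mem _

theorem powSMulSubgroup_le_comap (t : R) (i : ℕ) (g : A →ₗ[R] B) :
    powSMulSubgroup t A i ≤ (powSMulSubgroup t B i).comap g.toAddMonoidHom := by
  rintro _ ⟨a, rfl⟩
  exact ⟨g a, map_smul g _ a⟩

end PowSMul

/-- Let `R` be a ring, `t` central with `t^(n+1) = 0`, and `f : M → N` a
morphism of cochain complexes of left `R`-modules.  If the induced morphism
`Grⁱ_t(f) : tⁱM ⧸ tⁱ⁺¹M → tⁱN ⧸ tⁱ⁺¹N` on associated graded complexes is a
quasi-isomorphism for every `i = 0, …, n` (stated elementwise: surjectivity and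
injectivity on cohomology of the graded pieces), then `f` is a quasi-isomorphism
(stated elementwise: surjectivity and injectivity on cohomology). -/
theorem quasiIso_of_gr_quasiIso
    {R : Type*} [Ring R] (t : R) (ht : t ∈ Subring.center R) (n : ℕ)
    (htn : t ^ (n + 1) = 0)
    (M N : ℤ → Type*) [∀ j, AddCommGroup (M j)] [∀ j, Module R (M j)]
    [∀ j, AddCommGroup (N j)] [∀ j, Module R (N j)]
    (dM : ∀ j : ℤ, M j →ₗ[R] M (j + 1)) (hdM : ∀ (j : ℤ) (x : M j), dM (j + 1) (dM j x) = 0)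
    (dN : ∀ j : ℤ, N j →ₗ[R] N (j + 1)) (hdN : ∀ (j : ℤ) (x : N j), dN (j + 1) (dN j x) = 0)
    (f : ∀ j : ℤ, M j →ₗ[R] N j)
    (hf : ∀ (j : ℤ) (x : M j), f (j + 1) (dM j x) = dN j (f j x))
    -- `Grⁱ(f)` is surjective on cohomology for all `i ≤ n`:
    (hGrSurj : ∀ i ≤ n, ∀ (j : ℤ) (x : N (j + 1)),
      (∃ m, x = t ^ i • m) → (∃ m, dN (j + 1) x = t ^ (i + 1) • m) →
      ∃ (z : M (j + 1)) (y : N j),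
        (∃ m, z = t ^ i • m) ∧ (∃ m, dM (j + 1) z = t ^ (i + 1) • m) ∧
        (∃ m, y = t ^ i • m) ∧ (∃ m, f (j + 1) z - x - dN j y = t ^ (i + 1) • m))
    -- `Grⁱ(f)` is injective on cohomology for all `i ≤ n`:
    (hGrInj : ∀ i ≤ n, ∀ (j : ℤ) (z : M (j + 1)),
      (∃ m, z = t ^ i • m) → (∃ m, dM (j + 1) z = t ^ (i + 1) • m) →
      (∃ y : N j, (∃ m, y = t ^ i • m) ∧ (∃ m, f (j + 1) z - dN j y = t ^ (i + 1) • m)) →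
      ∃ w : M j, (∃ m, w = t ^ i • m) ∧ (∃ m, z - dM j w = t ^ (i + 1) • m)) :
    -- `f` is surjective on cohomology:
    (∀ (j : ℤ) (x : N (j + 1)), dN (j + 1) x = 0 →
      ∃ (z : M (j + 1)) (y : N j), dM (j + 1) z = 0 ∧ f (j + 1) z = x + dN j y) ∧
    -- `f` is injective on cohomology:
    (∀ (j : ℤ) (z : M (j + 1)), dM (j + 1) z = 0 →
      (∃ y : N j, f (j + 1) z = dN j y) → ∃ w : M j, z = dM j w) :=
  quasiIso_of_gr_quasiIso_general (dM := fun j => (dM j).toAddMonoidHom)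
    (dN := fun j => (dN j).toAddMonoidHom) (f := fun j => (f j).toAddMonoidHom)
    (FM := fun i j => powSMulSubgroup t (M j) i) (FN := fun i j => powSMulSubgroup t (N j) i)
    hdM hdN hf (fun i j => powSMulSubgroup_le_comap t i (f j))
    (fun _ => powSMulSubgroup_zero t) (fun _ => powSMulSubgroup_eq_bot htn)
    (fun _ => powSMulSubgroup_zero t) (fun _ => powSMulSubgroup_eq_bot htn) hGrSurj hGrInj
end

section
/- Let k be a field and k[ε] = k[ε]/(ε²) the ring of dual numbers. Let K be the cochain complex of k[ε]-modules with K^j = k[ε] for every j ∈ ℤ and with every differential given by multiplication by ε. Let M be any cochain complex of k[ε]-modules such that both the subcomplex εM (whose degree-j term is ε M^j) and the quotient complex M ⧸ εM are acyclic. Then every morphism of cochain complexes K → M is null-homotopic via a k[ε]-linear chain homotopy. -/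
open DualNumber

/-!
A morphism `φ : K → M` amounts to elements `u j = φ j 1` with `ε • u (j + 1) = d (u j)`, and a
null-homotopy to elements `w j` with `u (j + 1) = d (w j) + ε • w (j + 1)`. Modulo `ε`, each
`u (j + 1)` is a cycle, so acyclicity of `M ⧸ εM` gives `d (y j) - u (j + 1) = ε • z j`. Since
`ε ^ 2 = 0`, the element `ε • (z j + y (j + 1))` is a cycle of `εM`, hence equals `d (c j)` for some
`c j ∈ εM`. Then `w j = y j - c j` works, because `ε • c (j + 1) = 0`.
-/

/-- The family of maps `d`, thought of as the differential of a cochain complex `M`, is 1-acyclic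
with respect to a square-zero scalar `e`: the subcomplex `eM` and the quotient complex `M ⧸ eM`,
that is, the graded pieces of the `e`-adic filtration, are acyclic. Both conditions are spelled out
on elements of `M`, so that no quotient module has to be formed. The degrees only need a successor
`j + 1`, which includes periodic complexes. -/
structure IsOneAcyclic {R ι : Type*} [Semiring R] [Add ι] [One ι] {M : ι → Type*}
    [∀ j, AddCommGroup (M j)] [∀ j, Module R (M j)] (e : R)
    (d : ∀ j, M j →ₗ[R] M (j + 1)) : Prop where
  smul_exact : ∀ (j : ι) (x : M (j + 1)), (∃ m, x = e • m) → d (j + 1) x = 0 →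
    ∃ y : M j, (∃ m, y = e • m) ∧ d j y = x
  quotient_exact : ∀ (j : ι) (x : M (j + 1)), (∃ m, d (j + 1) x = e • m) →
    ∃ y : M j, ∃ m, d j y - x = e • m

section Semiring

variable {R : Type*} [Semiring R] {e : R}

theorem smul_smul_eq_zero_of_mul_self_eq_zero {N : Type*} [AddCommMonoid N] [Module R N]
    (he : e * e = 0) (n : N) : e • e • n = 0 := by
  rw [smul_smul, he, zero_smul]

theorem map_smul_add_eq_zero_of_sub_eq_smul {N P : Type*} [AddCommGroup N] [AddCommGroup P]
    [Module R N] [Module R P] {g : N →ₗ[R] P} (he : e * e = 0) {x u z y : N} {v t : P}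
    (hx : g x = 0) (hxu : x - u = e • z) (hyv : g y - v = e • t) (huv : e • v = g u) :
    g (e • (z + y)) = 0 := by
  have hz : g (e • z) = -(e • v) := by rw [← hxu, map_sub, hx, zero_sub, huv]
  have hy : e • g y = e • v := by
    rw [← sub_eq_zero, ← smul_sub, hyv, smul_smul_eq_zero_of_mul_self_eq_zero he]
  rw [smul_add, map_add, hz, map_smul, hy, neg_add_cancel]

theorem apply_eq_map_toSpanSingleton_add {N P : Type*} [AddCommMonoid N] [AddCommMonoid P]
    [Module R N] [Module R P] (he_comm : ∀ x, Commute e x) {f : N →ₗ[R] P} {g : R →ₗ[R] P}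
    {n : N} {p : P} (h : g 1 = f n + e • p) (x : R) :
    g x = f (LinearMap.toSpanSingleton R N n x) + LinearMap.toSpanSingleton R P p (e * x) :=
  calc
    g x = x • g 1 := by rw [← map_smul, smul_eq_mul, mul_one]
    _ = f (x • n) + (e * x) • p := by rw [h, smul_add, map_smul, smul_smul, (he_comm x).eq]

variable {ι : Type*} [Add ι] [One ι] {M : ι → Type*} [∀ j, AddCommGroup (M j)]
  [∀ j, Module R (M j)] {d : ∀ j, M j →ₗ[R] M (j + 1)}

theorem IsOneAcyclic.exists_eq_map_add_smul (hd : IsOneAcyclic e d) (he : e * e = 0)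
    (hdd : ∀ j x, d (j + 1) (d j x) = 0) {u : ∀ j, M j}
    (hu : ∀ j, e • u (j + 1) = d j (u j)) :
    ∃ w : ∀ j, M j, ∀ j, u (j + 1) = d j (w j) + e • w (j + 1) := by
  have hlift (j : ι) : ∃ y : M j, ∃ z, d j y - u (j + 1) = e • z :=
    hd.quotient_exact j _ ⟨_, (hu (j + 1)).symm⟩
  choose y z hyz using hlift
  have hcorrection (j : ι) : ∃ c : M j, (∃ m, c = e • m) ∧ d j c = e • (z j + y (j + 1)) :=
    hd.smul_exact j _ ⟨_, rfl⟩
      (map_smul_add_eq_zero_of_sub_eq_smul he (hdd j _) (hyz j) (hyz (j + 1)) (hu (j + 1)))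
  choose c hc hdc using hcorrection
  have hc_zero (j : ι) : e • c j = 0 := by
    obtain ⟨m, hm⟩ := hc j
    rw [hm, smul_smul_eq_zero_of_mul_self_eq_zero he]
  refine ⟨fun j => y j - c j, fun j => ?_⟩
  rw [map_sub, hdc, smul_add, ← hyz, smul_sub, hc_zero]
  abel

theorem dualNumber_complex_maps_nullHomotopic_general (he_comm : ∀ x, Commute e x)
    (he : e * e = 0) (hdd : ∀ j x, d (j + 1) (d j x) = 0) (hd : IsOneAcyclic e d)
    (φ : ∀ j, R →ₗ[R] M j) (hφ : ∀ j x, φ (j + 1) (e * x) = d j (φ j x)) :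
    ∃ h : ∀ j, R →ₗ[R] M j, ∀ j x, φ (j + 1) x = d j (h j x) + h (j + 1) (e * x) := by
  have hφ_one (j : ι) : e • φ (j + 1) 1 = d j (φ j 1) := by
    rw [← hφ, ← map_smul, smul_eq_mul]
  obtain ⟨w, hw⟩ := hd.exists_eq_map_add_smul he hdd (u := fun j => φ j 1) hφ_one
  exact ⟨fun j => LinearMap.toSpanSingleton R (M j) (w j),
    fun j => apply_eq_map_toSpanSingleton_add he_comm (hw j)⟩

end Semiring

/-- Let `k` be a field and `k[ε]` the dual numbers.  Let `K` be the complex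
with `K^j = k[ε]` in every degree and every differential equal to multiplication by `ε`.
If `M` is a cochain complex of `k[ε]`-modules such that the subcomplex `εM` and the
quotient complex `M ⧸ εM` are acyclic (stated elementwise), then every morphism of
complexes `K → M` (a family `φ j` with `φ (j+1) (ε * x) = d j (φ j x)`) is null-homotopic
via a `k[ε]`-linear chain homotopy `h` (with `h j : K^(j+1) → M^j`). -/
theorem dualNumber_complex_maps_nullHomotopic
    (k : Type*) [Field k]
    (M : ℤ → Type*) [∀ j, AddCommGroup (M j)] [∀ j, Module (DualNumber k) (M j)]
    (d : ∀ j : ℤ, M j →ₗ[DualNumber k] M (j + 1))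
    (hdd : ∀ (j : ℤ) (x : M j), d (j + 1) (d j x) = 0)
    -- the subcomplex `εM` is acyclic:
    (hsub : ∀ (j : ℤ) (x : M (j + 1)), (∃ m, x = (ε : DualNumber k) • m) →
      d (j + 1) x = 0 →
      ∃ y : M j, (∃ m, y = (ε : DualNumber k) • m) ∧ d j y = x)
    -- the quotient complex `M ⧸ εM` is acyclic:
    (hquot : ∀ (j : ℤ) (x : M (j + 1)),
      (∃ m, d (j + 1) x = (ε : DualNumber k) • m) →
      ∃ y : M j, ∃ m, d j y - x = (ε : DualNumber k) • m)
    -- a morphism of complexes `K → M`: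
    (φ : ∀ j : ℤ, DualNumber k →ₗ[DualNumber k] M j)
    (hφ : ∀ (j : ℤ) (x : DualNumber k), φ (j + 1) ((ε : DualNumber k) * x) = d j (φ j x)) :
    -- it is null-homotopic via a `k[ε]`-linear homotopy:
    ∃ h : ∀ j : ℤ, DualNumber k →ₗ[DualNumber k] M j,
      ∀ (j : ℤ) (x : DualNumber k),
        φ (j + 1) x = d j (h j x) + h (j + 1) ((ε : DualNumber k) * x) :=
  dualNumber_complex_maps_nullHomotopic_general commute_eps_left eps_mul_eps hdd ⟨hsub, hquot⟩ φ hφ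
end
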